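/- Under Assumption 1, for every i ∈ [m]: if B ⊆ [m]∖{i} is a causal Markov blanket of X_i and A ⊆ [m]∖{i} is a causal Markov boundary of X_i, then A ⊆ B. -/

import Mathlib

open Finset

/-- Probability of an event under the probability mass function `p` on a finite space. -/
noncomputable def pr {Ω : Type} [Fintype Ω] (p : Ω → ℝ) (E : Set Ω) : ℝ :=
  ∑ ω : Ω, E.indicator p ω

/-- Shannon conditional mutual information `I(A ; B | C)` of finite-valued random variables
on a finite probability space with pmf `p` (terms with vanishing probability contribute `0`,
by the conventions `Real.log 0 = 0`, `x / 0 = 0`). -/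
noncomputable def cmi {Ω α β γ : Type} [Fintype Ω] [Fintype α] [Fintype β] [Fintype γ]
    (p : Ω → ℝ) (A : Ω → α) (B : Ω → β) (C : Ω → γ) : ℝ :=
  ∑ a : α, ∑ b : β, ∑ c : γ,
    pr p {ω | A ω = a ∧ B ω = b ∧ C ω = c} *
      Real.log (pr p {ω | A ω = a ∧ B ω = b ∧ C ω = c} * pr p {ω | C ω = c} /
        (pr p {ω | A ω = a ∧ C ω = c} * pr p {ω | B ω = b ∧ C ω = c}))

/-- `A` and `B` are conditionally independent given `C` (under the pmf `p`). -/
def CondIndep {Ω α β γ : Type} [Fintype Ω] (p : Ω → ℝ)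
    (A : Ω → α) (B : Ω → β) (C : Ω → γ) : Prop :=
  ∀ (a : α) (b : β) (c : γ),
    pr p {ω | A ω = a ∧ B ω = b ∧ C ω = c} * pr p {ω | C ω = c}
      = pr p {ω | A ω = a ∧ C ω = c} * pr p {ω | B ω = b ∧ C ω = c}

/-- Trajectories of `m` processes over `n` time steps with alphabet `𝒳`:
`ω i j` is the value of process `i` at (0-indexed) time `j`. -/
abbrev Traj (m n : ℕ) (𝒳 : Type) := Fin m → Fin n → 𝒳

/-- The past `X_S^{j-1}`: the values of the processes in `S` at times strictly before `j`;
all other entries are masked by `none`. -/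
def past {m n : ℕ} {𝒳 : Type} (S : Finset (Fin m)) (j : Fin n) (ω : Traj m n 𝒳) :
    Fin m → Fin n → Option 𝒳 :=
  fun k t => if k ∈ S ∧ t < j then some (ω k t) else none

/-- Causally conditioned directed information
`I(X_S → X_i ‖ X_T) := Σ_{j=1}^{n} I(X_S^{j-1} ; X_{i,j} | X_i^{j-1}, X_T^{j-1})`. -/
noncomputable def di {m n : ℕ} {𝒳 : Type} [Fintype 𝒳] [DecidableEq 𝒳]
    (p : Traj m n 𝒳 → ℝ) (S : Finset (Fin m)) (i : Fin m) (T : Finset (Fin m)) : ℝ :=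
  ∑ j : Fin n,
    cmi p (past S j) (fun ω => ω i j) (fun ω => (past {i} j ω, past T j ω))

/-- Assumption 1: the joint distribution is strictly positive (and is a pmf), and at each
time `j` the variables `X_{1,j}, …, X_{m,j}` are mutually conditionally independent given
the full past `X_{[m]}^{j-1}` (stated in the division-free form
`P(joint ∧ past) · P(past)^{m-1} = Π_i P(X_{i,j} = x_i ∧ past)`). -/
def Assumption1 {m n : ℕ} {𝒳 : Type} [Fintype 𝒳] [DecidableEq 𝒳]
    (p : Traj m n 𝒳 → ℝ) : Prop :=
  (∀ ω, 0 < p ω) ∧ (∑ ω : Traj m n 𝒳, p ω = 1) ∧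
    ∀ (j : Fin n) (x : Fin m → 𝒳) (h : Fin m → Fin n → Option 𝒳),
      pr p {ω | (∀ i, ω i j = x i) ∧ past Finset.univ j ω = h} *
          pr p {ω | past Finset.univ j ω = h} ^ (m - 1)
        = ∏ i : Fin m, pr p {ω | ω i j = x i ∧ past Finset.univ j ω = h}

/-- `S ⊆ [m]∖{i}` is a causal Markov blanket of `X_i` if
`I(X_{[m]∖({i}∪S)} → X_i ‖ X_S) = 0`. -/
def IsCausalBlanket {m n : ℕ} {𝒳 : Type} [Fintype 𝒳] [DecidableEq 𝒳]
    (p : Traj m n 𝒳 → ℝ) (i : Fin m) (S : Finset (Fin m)) : Prop :=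
  S ⊆ Finset.univ.erase i ∧ di p (Finset.univ.erase i \ S) i S = 0

/-- A causal Markov boundary `A(i)` of `X_i` is a causal Markov blanket of minimum
cardinality. -/
def IsCausalBoundary {m n : ℕ} {𝒳 : Type} [Fintype 𝒳] [DecidableEq 𝒳]
    (p : Traj m n 𝒳 → ℝ) (i : Fin m) (A : Finset (Fin m)) : Prop :=
  IsCausalBlanket p i A ∧
    ∀ B : Finset (Fin m), IsCausalBlanket p i B → A.card ≤ B.card

/-!
Conditional mutual information is the relative entropy of the joint law of `(A, B, C)` from the law
`P(a, c) P(b, c) / P(c)`, so by Gibbs' inequality it vanishes exactly under conditional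
independence. Under full support, conditional independence of `A` and `B` given `C` says that the
conditional probabilities of `B` given `(A, C)` depend on `C` only. Hence `S` is a causal Markov
blanket of `X_i` exactly when the conditional probabilities of `X_{i,j}` given the full past are
functions of the past of `{i} ∪ S`. As the values of different processes can be combined freely, a
function of the past of `U` that is also a function of the past of `V` is a function of the past of
`U ∩ V`. So blankets are closed under intersection, and the intersection of a minimum blanket with
any other blanket cannot be smaller than the minimum one.
-/

section Gibbs

open InformationTheory

lemma mul_log_div_eq_mul_klFun {x y : ℝ} (h : y = 0 → x = 0) :
    x * Real.log (x / y) = y * klFun (x / y) + (x - y) := by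
  rcases eq_or_ne y 0 with hy | hy
  · simp [hy, h hy]
  · rw [klFun_apply]
    field_simp
    ring

lemma mul_klFun_div_eq_zero_iff {x y : ℝ} (hx : 0 ≤ x) (hy : 0 ≤ y) (h : y = 0 → x = 0) :
    y * klFun (x / y) = 0 ↔ x = y := by
  rcases eq_or_ne y 0 with hy₀ | hy₀
  · simp [hy₀, h hy₀]
  · rw [mul_eq_zero_iff_left hy₀, klFun_eq_zero_iff (div_nonneg hx hy), div_eq_one_iff_eq hy₀]

variable {ι : Type*} [Fintype ι] {x y : ι → ℝ}

lemma sum_mul_log_div_eq_sum_mul_klFun (hac : ∀ k, y k = 0 → x k = 0)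
    (hsum : ∑ k, x k = ∑ k, y k) :
    ∑ k, x k * Real.log (x k / y k) = ∑ k, y k * klFun (x k / y k) := by
  simp only [mul_log_div_eq_mul_klFun (hac _), sum_add_distrib, sum_sub_distrib, hsum, sub_self,
    add_zero]

lemma sum_mul_log_div_nonneg (hx : ∀ k, 0 ≤ x k) (hy : ∀ k, 0 ≤ y k)
    (hac : ∀ k, y k = 0 → x k = 0) (hsum : ∑ k, x k = ∑ k, y k) :
    0 ≤ ∑ k, x k * Real.log (x k / y k) := by
  rw [sum_mul_log_div_eq_sum_mul_klFun hac hsum]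
  exact sum_nonneg fun k _ => mul_nonneg (hy k) (klFun_nonneg (div_nonneg (hx k) (hy k)))

lemma sum_mul_log_div_eq_zero_iff (hx : ∀ k, 0 ≤ x k) (hy : ∀ k, 0 ≤ y k)
    (hac : ∀ k, y k = 0 → x k = 0) (hsum : ∑ k, x k = ∑ k, y k) :
    ∑ k, x k * Real.log (x k / y k) = 0 ↔ ∀ k, x k = y k := by
  rw [sum_mul_log_div_eq_sum_mul_klFun hac hsum, sum_eq_zero_iff_of_nonneg fun k _ =>
    mul_nonneg (hy k) (klFun_nonneg (div_nonneg (hx k) (hy k)))]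
  simp only [mem_univ, true_imp_iff, mul_klFun_div_eq_zero_iff (hx _) (hy _) (hac _)]

end Gibbs

section Probability

variable {Ω α β : Type} [Fintype Ω] {p : Ω → ℝ}

lemma pr_nonneg (hp : ∀ ω, 0 ≤ p ω) (E : Set Ω) : 0 ≤ pr p E :=
  sum_nonneg fun _ _ => Set.indicator_nonneg (fun ω _ => hp ω) _

lemma pr_mono (hp : ∀ ω, 0 ≤ p ω) {E F : Set Ω} (h : E ⊆ F) : pr p E ≤ pr p F :=
  sum_le_sum fun _ _ => Set.indicator_le_indicator_of_subset h hp _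

lemma pr_pos (hp : ∀ ω, 0 < p ω) {E : Set Ω} (hE : E.Nonempty) : 0 < pr p E := by
  obtain ⟨ω, hω⟩ := hE
  refine sum_pos' (fun _ _ => Set.indicator_nonneg (fun ω _ => (hp ω).le) _) ⟨ω, mem_univ ω, ?_⟩
  rw [Set.indicator_of_mem hω]
  exact hp ω

lemma pr_eq_zero_of_subset (hp : ∀ ω, 0 ≤ p ω) {E F : Set Ω} (h : E ⊆ F) (hF : pr p F = 0) :
    pr p E = 0 :=
  le_antisymm ((pr_mono hp h).trans hF.le) (pr_nonneg hp E)

lemma pr_eq_zero_of_forall_notMem (p : Ω → ℝ) {E : Set Ω} (h : ∀ ω, ω ∉ E) : pr p E = 0 :=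
  sum_eq_zero fun ω _ => Set.indicator_of_notMem (h ω) _

lemma sum_pr_eq_and [Fintype α] (p : Ω → ℝ) (A : Ω → α) (E : Ω → Prop) :
    ∑ a, pr p {ω | A ω = a ∧ E ω} = pr p {ω | E ω} := by
  classical
  unfold pr
  rw [sum_comm]
  refine sum_congr rfl fun ω _ => ?_
  by_cases h : E ω <;> simp [Set.indicator_apply, h]

/-- The conditional probability of the event `B = b` given the random variable `D`, as a function of
the outcome: at `ω` the conditioning event is that `D` takes the value `D ω`. -/
noncomputable def condPr (p : Ω → ℝ) (B : Ω → β) (b : β) (D : Ω → α) (ω : Ω) : ℝ :=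
  pr p {ω' | B ω' = b ∧ D ω' = D ω} / pr p {ω' | D ω' = D ω}

lemma condPr_factorsThrough (p : Ω → ℝ) (B : Ω → β) (b : β) (D : Ω → α) :
    (condPr p B b D).FactorsThrough D := fun ω ω' h => by
  rw [condPr, condPr, h]

lemma condPr_congr {δ : Type} (p : Ω → ℝ) (B : Ω → β) (b : β) {D : Ω → α} {D' : Ω → δ}
    (h : ∀ ω ω', D ω = D ω' ↔ D' ω = D' ω') : condPr p B b D = condPr p B b D' := by
  funext ω
  simp only [condPr, h]

end Probability

section CondMutualInfo

variable {Ω α β γ : Type} [Fintype Ω]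

/-- The joint law of `(A, B, C)` as a mass function on `α × β × γ`. -/
noncomputable def jointPr (p : Ω → ℝ) (A : Ω → α) (B : Ω → β) (C : Ω → γ)
    (t : α × β × γ) : ℝ :=
  pr p {ω | A ω = t.1 ∧ B ω = t.2.1 ∧ C ω = t.2.2}

/-- The law `P(a, c) P(b, c) / P(c)` on `α × β × γ`, which has the same `(A, C)` and `(B, C)`
marginals as the joint law of `(A, B, C)` but makes `A` and `B` conditionally independent given `C`.
It is `0` where `P(c) = 0`, by the convention `x / 0 = 0`. -/
noncomputable def condProdPr (p : Ω → ℝ) (A : Ω → α) (B : Ω → β) (C : Ω → γ)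
    (t : α × β × γ) : ℝ :=
  pr p {ω | A ω = t.1 ∧ C ω = t.2.2} * pr p {ω | B ω = t.2.1 ∧ C ω = t.2.2} /
    pr p {ω | C ω = t.2.2}

variable {p : Ω → ℝ} (A : Ω → α) (B : Ω → β) (C : Ω → γ)

lemma jointPr_nonneg (hp : ∀ ω, 0 ≤ p ω) (t : α × β × γ) : 0 ≤ jointPr p A B C t :=
  pr_nonneg hp _

lemma condProdPr_nonneg (hp : ∀ ω, 0 ≤ p ω) (t : α × β × γ) : 0 ≤ condProdPr p A B C t :=
  div_nonneg (mul_nonneg (pr_nonneg hp _) (pr_nonneg hp _)) (pr_nonneg hp _)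

lemma jointPr_eq_zero_of_condProdPr_eq_zero (hp : ∀ ω, 0 ≤ p ω) {t : α × β × γ}
    (h : condProdPr p A B C t = 0) : jointPr p A B C t = 0 := by
  simp only [condProdPr, div_eq_zero_iff, mul_eq_zero] at h
  rcases h with (hac | hbc) | hc
  · exact pr_eq_zero_of_subset hp (fun _ hω => And.intro hω.1 hω.2.2) hac
  · exact pr_eq_zero_of_subset hp (fun _ hω => hω.2) hbc
  · exact pr_eq_zero_of_subset hp (fun _ hω => hω.2.2) hc

lemma condIndep_iff_jointPr_eq_condProdPr (hp : ∀ ω, 0 ≤ p ω) :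
    CondIndep p A B C ↔ ∀ t, jointPr p A B C t = condProdPr p A B C t := by
  simp only [CondIndep, Prod.forall]
  refine forall₃_congr fun a b c => ?_
  rcases eq_or_ne (pr p {ω | C ω = c}) 0 with hc | hc
  · have hac : pr p {ω | A ω = a ∧ C ω = c} = 0 := pr_eq_zero_of_subset hp (fun ω hω => hω.2) hc
    have habc : jointPr p A B C (a, b, c) = 0 :=
      pr_eq_zero_of_subset hp (fun ω hω => hω.2.2) hc
    simp [condProdPr, hc, hac, habc]
  · exact (eq_div_iff hc).symm

lemma sum_jointPr_fst [Fintype α] (p : Ω → ℝ) (s : β × γ) :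
    ∑ a, jointPr p A B C (a, s) = pr p {ω | B ω = s.1 ∧ C ω = s.2} :=
  sum_pr_eq_and p A fun ω => B ω = s.1 ∧ C ω = s.2

lemma sum_condProdPr_fst [Fintype α] (hp : ∀ ω, 0 ≤ p ω) (s : β × γ) :
    ∑ a, condProdPr p A B C (a, s) = pr p {ω | B ω = s.1 ∧ C ω = s.2} := by
  simp only [condProdPr]
  rw [← sum_div, ← sum_mul, sum_pr_eq_and p A fun ω => C ω = s.2]
  exact mul_div_cancel_left_of_imp (pr_eq_zero_of_subset hp fun ω hω => hω.2)

variable [Fintype α] [Fintype β] [Fintype γ]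

lemma sum_jointPr_eq_sum_condProdPr (hp : ∀ ω, 0 ≤ p ω) :
    ∑ t, jointPr p A B C t = ∑ t, condProdPr p A B C t := by
  simp only [Fintype.sum_prod_type_right (α₁ := α), sum_jointPr_fst, sum_condProdPr_fst A B C hp]

lemma cmi_eq_sum_mul_log_div (p : Ω → ℝ) :
    cmi p A B C =
      ∑ t, jointPr p A B C t * Real.log (jointPr p A B C t / condProdPr p A B C t) := by
  simp only [cmi, jointPr, condProdPr, Fintype.sum_prod_type, div_div_eq_mul_div]

lemma cmi_nonneg (hp : ∀ ω, 0 ≤ p ω) : 0 ≤ cmi p A B C := by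
  rw [cmi_eq_sum_mul_log_div]
  exact sum_mul_log_div_nonneg (jointPr_nonneg A B C hp) (condProdPr_nonneg A B C hp)
    (fun _ => jointPr_eq_zero_of_condProdPr_eq_zero A B C hp)
    (sum_jointPr_eq_sum_condProdPr A B C hp)

lemma cmi_eq_zero_iff (hp : ∀ ω, 0 ≤ p ω) : cmi p A B C = 0 ↔ CondIndep p A B C := by
  rw [cmi_eq_sum_mul_log_div, condIndep_iff_jointPr_eq_condProdPr A B C hp]
  exact sum_mul_log_div_eq_zero_iff (jointPr_nonneg A B C hp) (condProdPr_nonneg A B C hp)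
    (fun _ => jointPr_eq_zero_of_condProdPr_eq_zero A B C hp)
    (sum_jointPr_eq_sum_condProdPr A B C hp)

end CondMutualInfo

section CondIndep

variable {Ω α β γ : Type} [Fintype Ω] {p : Ω → ℝ} {A : Ω → α} {B : Ω → β} {C : Ω → γ}

lemma CondIndep.condPr_prod_eq (hp : ∀ ω, 0 < p ω) (h : CondIndep p A B C) (b : β) :
    condPr p B b (fun ω => (A ω, C ω)) = condPr p B b C := by
  funext ω
  have hAC : 0 < pr p {ω' | A ω' = A ω ∧ C ω' = C ω} := pr_pos hp ⟨ω, rfl, rfl⟩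
  have hC : 0 < pr p {ω' | C ω' = C ω} := pr_pos hp ⟨ω, rfl⟩
  simp only [condPr, Prod.mk.injEq, and_left_comm (a := B _ = b)]
  rw [div_eq_div_iff hAC.ne' hC.ne', h, mul_comm]

lemma condIndep_of_condPr_factorsThrough [Finite α] (hp : ∀ ω, 0 < p ω)
    (h : ∀ b, (condPr p B b fun ω => (A ω, C ω)).FactorsThrough C) : CondIndep p A B C := by
  intro a b c
  have := Fintype.ofFinite α
  obtain ⟨r, hr⟩ := (Function.factorsThrough_iff _).1 (h b)
  have hjoint (a' : α) : pr p {ω | A ω = a' ∧ B ω = b ∧ C ω = c} =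
      r c * pr p {ω | A ω = a' ∧ C ω = c} := by
    by_cases hne : ∃ ω, A ω = a' ∧ C ω = c
    · obtain ⟨ω, rfl, rfl⟩ := hne
      have hAC : 0 < pr p {ω' | A ω' = A ω ∧ C ω' = C ω} := pr_pos hp ⟨ω, rfl, rfl⟩
      have hω := congrFun hr ω
      simp only [condPr, Prod.mk.injEq, and_left_comm (a := B _ = b)] at hω
      exact (div_eq_iff hAC.ne').1 hω
    · have habc : pr p {ω | A ω = a' ∧ B ω = b ∧ C ω = c} = 0 :=
        pr_eq_zero_of_forall_notMem p fun ω hω => hne ⟨ω, hω.1, hω.2.2⟩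
      have hac : pr p {ω | A ω = a' ∧ C ω = c} = 0 :=
        pr_eq_zero_of_forall_notMem p fun ω hω => hne ⟨ω, hω⟩
      rw [habc, hac, mul_zero]
  have hmarginal : pr p {ω | B ω = b ∧ C ω = c} = r c * pr p {ω | C ω = c} := by
    rw [← sum_pr_eq_and p A, ← sum_pr_eq_and p A, mul_sum]
    exact sum_congr rfl fun a' _ => hjoint a'
  rw [hjoint, hmarginal]
  ring

lemma condIndep_iff_condPr_factorsThrough [Finite α] (hp : ∀ ω, 0 < p ω) :
    CondIndep p A B C ↔ ∀ b, (condPr p B b fun ω => (A ω, C ω)).FactorsThrough C := by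
  refine ⟨fun h b => ?_, condIndep_of_condPr_factorsThrough hp⟩
  rw [h.condPr_prod_eq hp]
  exact condPr_factorsThrough p B b C

end CondIndep

section Past

variable {m n : ℕ} {𝒳 : Type} {j : Fin n} {ω ω' : Traj m n 𝒳}

lemma past_eq_past_iff {S : Finset (Fin m)} :
    past S j ω = past S j ω' ↔ ∀ k ∈ S, ∀ t < j, ω k t = ω' k t := by
  simp only [funext_iff, past]
  refine ⟨fun h k hk t ht => by simpa [hk, ht] using h k t, fun h k t => ?_⟩
  by_cases hkt : k ∈ S ∧ t < j
  · simp [hkt, h k hkt.1 t hkt.2]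
  · simp [hkt]

lemma past_union_eq_past_union_iff {S T : Finset (Fin m)} :
    past (S ∪ T) j ω = past (S ∪ T) j ω' ↔ past S j ω = past S j ω' ∧ past T j ω = past T j ω' := by
  simp only [past_eq_past_iff, mem_union, or_imp, forall_and]

lemma exists_past_eq_and_past_eq {U V : Finset (Fin m)}
    (h : past (U ∩ V) j ω = past (U ∩ V) j ω') :
    ∃ ω'', past U j ω'' = past U j ω ∧ past V j ω'' = past V j ω' := by
  refine ⟨U.piecewise ω ω', past_eq_past_iff.2 fun k hk t _ => ?_,
    past_eq_past_iff.2 fun k hk t ht => ?_⟩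
  · rw [piecewise_eq_of_mem _ _ _ hk]
  · by_cases hkU : k ∈ U
    · rw [piecewise_eq_of_mem _ _ _ hkU, past_eq_past_iff.1 h k (mem_inter.2 ⟨hkU, hk⟩) t ht]
    · rw [piecewise_eq_of_notMem _ _ _ hkU]

lemma factorsThrough_past_inter {δ : Type*} {f : Traj m n 𝒳 → δ} {U V : Finset (Fin m)}
    (hU : f.FactorsThrough (past U j)) (hV : f.FactorsThrough (past V j)) :
    f.FactorsThrough (past (U ∩ V) j) := fun ω ω' h => by
  obtain ⟨ω'', hωU, hωV⟩ := exists_past_eq_and_past_eq h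
  exact (hU hωU).symm.trans (hV hωV)

end Past

section Blanket

variable {m n : ℕ} {𝒳 : Type} [Fintype 𝒳] [DecidableEq 𝒳] {p : Traj m n 𝒳 → ℝ} {i : Fin m}

lemma di_eq_zero_iff (hp : ∀ ω, 0 ≤ p ω) {S T : Finset (Fin m)} :
    di p S i T = 0 ↔
      ∀ j, CondIndep p (past S j) (fun ω => ω i j) fun ω => (past {i} j ω, past T j ω) := by
  simp only [di, sum_eq_zero_iff_of_nonneg fun _ _ => cmi_nonneg _ _ _ hp, mem_univ, true_imp_iff,
    cmi_eq_zero_iff _ _ _ hp]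

lemma isCausalBlanket_iff (hp : ∀ ω, 0 < p ω) {S : Finset (Fin m)} :
    IsCausalBlanket p i S ↔ S ⊆ univ.erase i ∧ ∀ j x,
      (condPr p (fun ω => ω i j) x (past univ j)).FactorsThrough (past (insert i S) j) := by
  have hpast {j : Fin n} (ω ω' : Traj m n 𝒳) :
      (past {i} j ω, past S j ω) = (past {i} j ω', past S j ω') ↔
        past (insert i S) j ω = past (insert i S) j ω' := by
    rw [Prod.mk.injEq, insert_eq, past_union_eq_past_union_iff]
  have hcover : univ.erase i \ S ∪ insert i S = univ := by
    ext k
    simp only [mem_union, mem_sdiff, mem_erase, mem_insert, mem_univ]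
    tauto
  have hfull {j : Fin n} (ω ω' : Traj m n 𝒳) :
      (past (univ.erase i \ S) j ω, past {i} j ω, past S j ω) =
          (past (univ.erase i \ S) j ω', past {i} j ω', past S j ω') ↔
        past univ j ω = past univ j ω' := by
    rw [Prod.mk.injEq, hpast, ← past_union_eq_past_union_iff, hcover]
  simp only [IsCausalBlanket, di_eq_zero_iff fun ω => (hp ω).le,
    condIndep_iff_condPr_factorsThrough hp, condPr_congr p _ _ hfull, Function.FactorsThrough,
    hpast]

lemma IsCausalBlanket.inter (hp : ∀ ω, 0 < p ω) {A B : Finset (Fin m)}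
    (hA : IsCausalBlanket p i A) (hB : IsCausalBlanket p i B) : IsCausalBlanket p i (A ∩ B) := by
  rw [isCausalBlanket_iff hp] at hA hB ⊢
  refine ⟨inter_subset_left.trans hA.1, fun j x => ?_⟩
  rw [insert_inter_distrib]
  exact factorsThrough_past_inter (hA.2 j x) (hB.2 j x)

theorem stmt_4_general (hp : ∀ ω, 0 < p ω) {A B : Finset (Fin m)} (hB : IsCausalBlanket p i B)
    (hA : IsCausalBoundary p i A) : A ⊆ B := by
  have hcard : A.card ≤ (A ∩ B).card := hA.2 _ (hA.1.inter hp hB)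
  exact inter_eq_left.1 (eq_of_subset_of_card_le inter_subset_left hcard)

end Blanket

/-- Under Assumption 1, every causal Markov boundary of `X_i` is contained
in every causal Markov blanket of `X_i`. -/
theorem stmt_4 {m n : ℕ} (hm : 2 ≤ m) (hn : 1 ≤ n)
    {𝒳 : Type} [Fintype 𝒳] [DecidableEq 𝒳] [Nonempty 𝒳]
    (p : Traj m n 𝒳 → ℝ) (hp : Assumption1 p)
    (i : Fin m) (B A : Finset (Fin m))
    (hB : IsCausalBlanket p i B) (hA : IsCausalBoundary p i A) :
    A ⊆ B :=
  stmt_4_general hp.1 hB hA
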